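/- Let (G, a) and (G', a') be attributed graphs with attributes in the same set Σ, let k ≥ 0, and let u be a vertex of G and u' a vertex of G' such that κ_walk^{(k)}(u, u) > 0 and κ_walk^{(k)}(u', u') > 0. Then the WL subtree kernel distance dominates the normalized walk kernel distance: √(2 − 2·δ(a_k(u), a'_k(u'))) ≥ √(2 − 2·κ_walk^{(k)}(u, u') / √(κ_walk^{(k)}(u, u) · κ_walk^{(k)}(u', u'))). -/

import Mathlib

/-! The attribute sequences of the `k`-walks from a vertex `u`, counted with multiplicity, can be
read off the depth-`k` WL label of `u`: unfolding the label gives the attribute of `u` and the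
labels of its neighbors one level down, which determine the sequences of the remaining walks. The
walk kernel depends on a vertex only through this multiset. Vertices with equal labels therefore
have normalized walk kernel `1`; for vertices with different labels it suffices that the normalized
walk kernel is nonnegative. -/

open Finset

/-- A walk of length `k` starting at `u`, encoded as a function `Fin (k+1) → V`
with consecutive vertices adjacent. -/
def walks {V : Type*} (G : SimpleGraph V) [Fintype V] [DecidableEq V]
    [DecidableRel G.Adj] (k : ℕ) (u : V) : Finset (Fin (k+1) → V) :=
  Finset.univ.filter fun p => p 0 = u ∧ ∀ j : Fin k, G.Adj (p j.castSucc) (p j.succ)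

open scoped Classical in
/-- The Dirac kernel. -/
noncomputable def dirac {α : Type*} (x y : α) : ℝ := if x = y then 1 else 0

/-- The walk kernel `κ_walk^{(k)}`. -/
noncomputable def walkKernel {V V' S : Type*} (G : SimpleGraph V) [Fintype V]
    [DecidableEq V] [DecidableRel G.Adj] (a : V → S)
    (G' : SimpleGraph V') [Fintype V'] [DecidableEq V'] [DecidableRel G'.Adj]
    (a' : V' → S) (k : ℕ) (u : V) (u' : V') : ℝ :=
  ∑ p ∈ walks G k u, ∑ p' ∈ walks G' k u', dirac (a ∘ p) (a' ∘ p')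

/-- The type of depth-`k` Weisfeiler-Lehman labels over an attribute set `S`. -/
def wlLabelType (S : Type u) : ℕ → Type u
  | 0 => S
  | k+1 => wlLabelType S k × Multiset (wlLabelType S k)

/-- The depth-`k` Weisfeiler-Lehman label of a vertex. -/
def wlLabel {V : Type*} {S : Type*} (G : SimpleGraph V) [Fintype V]
    [DecidableRel G.Adj] (a : V → S) : (k : ℕ) → V → wlLabelType S k
  | 0, u => a u
  | k+1, u => (wlLabel G a k u, (G.neighborFinset u).val.map (wlLabel G a k))

/-- `R` is an exact matching of the neighborhoods of `u` and `u'`. -/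
def ExactMatching {V V' S : Type*} (G : SimpleGraph V) [Fintype V]
    [DecidableRel G.Adj] (a : V → S)
    (G' : SimpleGraph V') [Fintype V'] [DecidableRel G'.Adj] (a' : V' → S)
    (u : V) (u' : V') (R : Finset (V × V')) : Prop :=
  (∀ e ∈ R, e.1 ∈ G.neighborFinset u ∧ e.2 ∈ G'.neighborFinset u') ∧
  R.card = (G.neighborFinset u).card ∧
  R.card = (G'.neighborFinset u').card ∧
  (∀ e ∈ R, ∀ f ∈ R, (e.1 = f.1 ↔ e.2 = f.2)) ∧
  (∀ e ∈ R, a e.1 = a' e.2)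

/-- Prepending `x` to a finite sequence, bundled as an embedding so that finsets of walks can be
mapped along it. -/
def consEmbedding {α : Type*} {n : ℕ} (x : α) : (Fin n → α) ↪ (Fin (n + 1) → α) where
  toFun p := Fin.cons x p
  inj' := Fin.cons_right_injective (α := fun _ => α) x

namespace wlLabelType

variable {S : Type*}

/-- The attribute of the vertex carrying a given WL label. -/
def root : {k : ℕ} → wlLabelType S k → S
  | 0, s => s
  | _ + 1, l => root l.1

/-- The multiset of attribute sequences of the `k`-walks from a vertex, read off the depth-`k` WL
label of that vertex without reference to the graph. -/
def walkAttrs : {k : ℕ} → wlLabelType S k → Multiset (Fin (k + 1) → S)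
  | 0, s => {fun _ => s}
  | _ + 1, l => l.2.bind fun m => (walkAttrs m).map (consEmbedding (root l.1))

end wlLabelType

lemma dirac_self {α : Type*} (x : α) : dirac x x = 1 :=
  if_pos rfl

lemma dirac_of_ne {α : Type*} {x y : α} (h : x ≠ y) : dirac x y = 0 :=
  if_neg h

lemma dirac_nonneg {α : Type*} (x y : α) : 0 ≤ dirac x y := by
  unfold dirac
  positivity

section Walks

variable {V : Type*} (G : SimpleGraph V) [Fintype V] [DecidableEq V] [DecidableRel G.Adj]

lemma mem_walks {k : ℕ} {u : V} {p : Fin (k + 1) → V} :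
    p ∈ walks G k u ↔ p 0 = u ∧ ∀ j : Fin k, G.Adj (p j.castSucc) (p j.succ) := by
  simp only [walks, mem_filter_univ]

lemma walks_zero (u : V) : walks G 0 u = {fun _ => u} := by
  ext p
  simp [mem_walks, funext_iff]

lemma cons_mem_walks_succ {k : ℕ} {u v : V} {q : Fin (k + 1) → V} :
    (Fin.cons v q : Fin (k + 2) → V) ∈ walks G (k + 1) u ↔
      v = u ∧ G.Adj u (q 0) ∧ q ∈ walks G k (q 0) := by
  simp only [mem_walks, Fin.forall_fin_succ (n := k), Fin.castSucc_zero, ← Fin.succ_castSucc,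
    Fin.cons_zero, Fin.cons_succ, true_and]
  exact and_congr_right fun h => by rw [h]

lemma pairwiseDisjoint_map_cons_walks (k : ℕ) (u : V) (s : Set V) :
    s.PairwiseDisjoint fun v => (walks G k v).map (consEmbedding u) := by
  intro v _ w _ hvw
  refine (disjoint_map _).2 (disjoint_left.2 fun q hv hw => hvw ?_)
  exact ((mem_walks G).1 hv).1.symm.trans ((mem_walks G).1 hw).1

lemma walks_succ (k : ℕ) (u : V) :
    walks G (k + 1) u = (G.neighborFinset u).disjiUnion
      (fun v => (walks G k v).map (consEmbedding u))
      (pairwiseDisjoint_map_cons_walks G k u _) := by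
  ext p
  simp only [mem_disjiUnion, SimpleGraph.mem_neighborFinset, mem_map]
  constructor
  · intro hp
    obtain ⟨v, q, rfl⟩ : ∃ v q, p = Fin.cons v q := ⟨p 0, Fin.tail p, (Fin.cons_self_tail p).symm⟩
    obtain ⟨rfl, hadj, hq⟩ := (cons_mem_walks_succ G).1 hp
    exact ⟨q 0, hadj, q, hq, rfl⟩
  · rintro ⟨v, hadj, q, hq, rfl⟩
    obtain rfl : q 0 = v := ((mem_walks G).1 hq).1
    exact (cons_mem_walks_succ G).2 ⟨rfl, hadj, hq⟩

end Walks

section WalkAttrs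

variable {V S : Type*} (G : SimpleGraph V) [Fintype V] [DecidableRel G.Adj] (a : V → S)

lemma root_wlLabel (k : ℕ) (u : V) : (wlLabel G a k u).root = a u := by
  induction k with
  | zero => rfl
  | succ _ ih => exact ih

variable [DecidableEq V]

/-- The multiset of attribute sequences of the `k`-walks from `u`. -/
def walkAttrs (k : ℕ) (u : V) : Multiset (Fin (k + 1) → S) :=
  (walks G k u).val.map (a ∘ ·)

lemma walkAttrs_zero (u : V) : walkAttrs G a 0 u = {fun _ => a u} := by
  simp only [walkAttrs, walks_zero, singleton_val, Multiset.map_singleton, Function.comp_def]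

lemma walkAttrs_succ (k : ℕ) (u : V) :
    walkAttrs G a (k + 1) u =
      (G.neighborFinset u).val.bind fun v => (walkAttrs G a k v).map (consEmbedding (a u)) := by
  have hcons : (a ∘ ·) ∘ consEmbedding (n := k + 1) u = consEmbedding (a u) ∘ (a ∘ ·) :=
    funext fun q => Fin.comp_cons a u q
  simp only [walkAttrs, walks_succ, disjiUnion_val, map_val, Multiset.map_bind, Multiset.map_map,
    hcons]

theorem walkAttrs_wlLabel (k : ℕ) (u : V) : (wlLabel G a k u).walkAttrs = walkAttrs G a k u := by
  induction k generalizing u with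
  | zero => exact (walkAttrs_zero G a u).symm
  | succ k ih =>
    calc (wlLabel G a (k + 1) u).walkAttrs
      _ = (G.neighborFinset u).val.bind fun v =>
            (wlLabel G a k v).walkAttrs.map (consEmbedding (wlLabel G a k u).root) :=
          Multiset.bind_map _ _ _
      _ = (G.neighborFinset u).val.bind fun v => (walkAttrs G a k v).map (consEmbedding (a u)) := by
          simp only [ih, root_wlLabel]
      _ = walkAttrs G a (k + 1) u := (walkAttrs_succ G a k u).symm

end WalkAttrs

section WalkKernel

variable {V V' S : Type*} (G : SimpleGraph V) [Fintype V] [DecidableEq V] [DecidableRel G.Adj]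
  (a : V → S) (G' : SimpleGraph V') [Fintype V'] [DecidableEq V'] [DecidableRel G'.Adj]
  (a' : V' → S) (k : ℕ) (u : V) (u' : V')

lemma walkKernel_nonneg : 0 ≤ walkKernel G a G' a' k u u' :=
  sum_nonneg fun _ _ => sum_nonneg fun _ _ => dirac_nonneg _ _

lemma walkKernel_eq_sum_walkAttrs :
    walkKernel G a G' a' k u u' =
      ((walkAttrs G a k u).map fun s => ((walkAttrs G' a' k u').map (dirac s)).sum).sum := by
  simp only [walkAttrs, Multiset.map_map]
  rfl

theorem dirac_wlLabel_le_normalized_walkKernel (hpos : 0 < walkKernel G a G a k u u) :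
    dirac (wlLabel G a k u) (wlLabel G' a' k u') ≤ walkKernel G a G' a' k u u' /
      √(walkKernel G a G a k u u * walkKernel G' a' G' a' k u' u') := by
  by_cases hlabel : wlLabel G a k u = wlLabel G' a' k u'
  · have hattrs : walkAttrs G a k u = walkAttrs G' a' k u' := by
      rw [← walkAttrs_wlLabel, ← walkAttrs_wlLabel, hlabel]
    have hcross : walkKernel G a G' a' k u u' = walkKernel G a G a k u u := by
      simp only [walkKernel_eq_sum_walkAttrs, hattrs]
    have hself : walkKernel G' a' G' a' k u' u' = walkKernel G a G a k u u := by
      simp only [walkKernel_eq_sum_walkAttrs, hattrs]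
    rw [hlabel, dirac_self, hcross, hself, Real.sqrt_mul_self hpos.le, div_self hpos.ne']
  · rw [dirac_of_ne hlabel]
    exact div_nonneg (walkKernel_nonneg G a G' a' k u u') (Real.sqrt_nonneg _)

end WalkKernel

/-- The WL subtree kernel distance dominates the normalized walk
kernel distance:
`√(2 − 2δ(a_k(u), a'_k(u'))) ≥ √(2 − 2κ_walk^{(k)}(u,u')/√(κ_walk^{(k)}(u,u)·κ_walk^{(k)}(u',u')))`. -/
theorem statement6 {V V' S : Type*} (G : SimpleGraph V) [Fintype V] [DecidableEq V]
    [DecidableRel G.Adj] (a : V → S)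
    (G' : SimpleGraph V') [Fintype V'] [DecidableEq V'] [DecidableRel G'.Adj]
    (a' : V' → S) (k : ℕ) (u : V) (u' : V')
    (h1 : 0 < walkKernel G a G a k u u)
    (h2 : 0 < walkKernel G' a' G' a' k u' u') :
    Real.sqrt (2 - 2 * dirac (wlLabel G a k u) (wlLabel G' a' k u')) ≥
      Real.sqrt (2 - 2 * walkKernel G a G' a' k u u' /
        Real.sqrt (walkKernel G a G a k u u * walkKernel G' a' G' a' k u' u')) := by
  have hle := dirac_wlLabel_le_normalized_walkKernel G a G' a' k u u' h1
  rw [mul_div_assoc]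
  exact Real.sqrt_le_sqrt (by linarith)
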